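/- Let L₁, …, Lₙ be pairwise disjoint straight lines in ℝ³ = ℝ² × ℝ, each of which is level, i.e., each Lᵢ is contained in a horizontal plane ℝ² × {tᵢ} for some tᵢ ∈ ℝ (the tᵢ need not be distinct, and lines lying in the same plane are disjoint, hence parallel). Then the fundamental group of the complement ℝ³ ∖ (L₁ ∪ ⋯ ∪ Lₙ) is a free group of rank n. -/

import Mathlib

/-!
Fix `e` transverse to all the lines, and let `F i` be the functional that defines the `i`-th line in
its plane, normalized by `F i e = 1`. Disjoint lines at the same level are parallel, so `F i`
depends only on the level, and Lagrange interpolation of the `F i` yields functionals `Φ z`,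
depending polynomially on `z`, with `Φ z e = 1` at every level. The map `(y, z) ↦ (z, Φ z y)` has
contractible fibres, each line is a fibre, and so the complement of the lines is homotopy equivalent
to the plane minus `n` points.

The punctured plane is a disc with `n` handles: the plane slit upwards from each puncture, together
with a downwards slit strip around each puncture. The homomorphism from the free group to the
fundamental group sends the `i`-th generator to the loop through the `i`-th handle. Its inverse is
the monodromy of the multivalued function with values in the free group that is constant off the
upward slits and is multiplied by the `i`-th generator across the `i`-th slit.
-/

open Set unitInterval Topology
open scoped ContinuousMap

section PathClasses

variable {X : Type*} [TopologicalSpace X]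

theorem homotopicQuotient_induction {κ : Type*} {V : κ → Set X} (isOpen : ∀ c, IsOpen (V c))
    (cover : ∀ q, ∃ c, q ∈ V c) {C : ∀ {p q : X}, Path.Homotopic.Quotient p q → Prop}
    (small : ∀ c {p q : X} (γ : Path p q), (∀ s, γ s ∈ V c) → C (.mk γ))
    (trans : ∀ {p q r : X} (k : Path.Homotopic.Quotient p q) (l : Path.Homotopic.Quotient q r),
      C k → C l → C (k.trans l))
    {p q : X} (k : Path.Homotopic.Quotient p q) : C k := by
  induction k using Path.Homotopic.Quotient.ind with | mk γ =>
  obtain ⟨γ₀, rfl, rfl⟩ := γ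
  set γ : Path (γ₀ 0) (γ₀ 1) := ⟨γ₀, rfl, rfl⟩
  have small_subpath (c : κ) (s s' : I) (h : uIcc s s' ⊆ γ ⁻¹' V c) :
      C (.mk (γ.subpath s s')) := by
    refine small c _ fun r => ?_
    obtain ⟨u, hu, hγu⟩ : γ.subpath s s' r ∈ γ '' uIcc s s' :=
      γ.range_subpath s s' ▸ mem_range_self r
    exact hγu ▸ h hu
  have subpaths : ∀ s s', C (.mk (γ.subpath s s')) := by
    refine PreconnectedSpace.induction₂' _ (fun s => ?_) ⟨fun s₁ s₂ s₃ h₁₂ h₂₃ => ?_⟩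
    · obtain ⟨c, hc⟩ := cover (γ s)
      have hV : γ ⁻¹' V c ∈ 𝓝 s := ((isOpen c).preimage γ.continuous).mem_nhds hc
      filter_upwards [Filter.tendsto_smallSets_iff.1
        (tendsto_const_nhds.uIcc Filter.tendsto_id) _ hV] with s' hs'
      exact ⟨small_subpath c s s' hs', small_subpath c s' s (uIcc_comm s s' ▸ hs')⟩
    · have homotopic := Path.Homotopic.Quotient.eq.2 ⟨Path.Homotopy.subpathTransSubpath γ s₁ s₂ s₃⟩
      rw [← homotopic, Path.Homotopic.Quotient.mk_trans]
      exact trans _ _ h₁₂ h₂₃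
  simpa using subpaths 0 1

/-- The homotopy class, in the ambient space, of the paths from `p` to `q` that stay inside the
simply connected set `V`. -/
noncomputable def classWithin {V : Set X} (hV : IsSimplyConnected V) {p q : X} (hp : p ∈ V)
    (hq : q ∈ V) : Path.Homotopic.Quotient p q :=
  .mk (hV.isPathConnected.joinedIn p hp q hq).somePath

variable {V : Set X} {p q r : X}

theorem classWithin_eq_mk (hV : IsSimplyConnected V) (hp : p ∈ V) (hq : q ∈ V) (γ : Path p q)
    (hγ : ∀ s, γ s ∈ V) : classWithin hV hp hq = .mk γ := by
  have := hV.simplyConnectedSpace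
  let restrict (δ : Path p q) (hδ : ∀ s, δ s ∈ V) : Path (⟨p, hp⟩ : V) ⟨q, hq⟩ :=
    { toFun := fun s => ⟨δ s, hδ s⟩, source' := by simp, target' := by simp }
  have homotopic := SimplyConnectedSpace.paths_homotopic
    (restrict _ (hV.isPathConnected.joinedIn p hp q hq).somePath_mem) (restrict γ hγ)
  exact Path.Homotopic.Quotient.eq.2 (homotopic.map ⟨Subtype.val, continuous_subtype_val⟩)

theorem classWithin_self (hV : IsSimplyConnected V) (hp : p ∈ V) :
    classWithin hV hp hp = .refl p :=
  classWithin_eq_mk hV hp hp (.refl p) fun _ => hp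

theorem classWithin_trans (hV : IsSimplyConnected V) (hp : p ∈ V) (hq : q ∈ V) (hr : r ∈ V) :
    (classWithin hV hp hq).trans (classWithin hV hq hr) = classWithin hV hp hr := by
  rw [classWithin, classWithin, ← Path.Homotopic.Quotient.mk_trans]
  refine (classWithin_eq_mk hV hp hr _ fun s => ?_).symm
  rw [Path.trans_apply]
  split_ifs
  exacts [JoinedIn.somePath_mem _ _, JoinedIn.somePath_mem _ _]

theorem classWithin_eq_of_isPathConnected {V' W : Set X} (hV : IsSimplyConnected V)
    (hV' : IsSimplyConnected V') (hW : IsPathConnected W) (hWV : W ⊆ V) (hWV' : W ⊆ V')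
    (hp : p ∈ W) (hq : q ∈ W) :
    classWithin hV (hWV hp) (hWV hq) = classWithin hV' (hWV' hp) (hWV' hq) := by
  have hγ := (hW.joinedIn p hp q hq).somePath_mem
  rw [classWithin_eq_mk hV _ _ _ fun s => hWV (hγ s),
    classWithin_eq_mk hV' _ _ _ fun s => hWV' (hγ s)]

end PathClasses

/-- A multivalued function on `X` with values in the group `G`, given by its branches on open sets
covering `X`. On overlaps two branches differ by a right translation `(branch d)⁻¹ * branch c` that
is locally constant, so that `(source c) × G` glue to a covering of `X` with fibre `G`. Only the
translations, not the branches, are required to be locally constant. -/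
structure BranchSystem (κ X G : Type*) [TopologicalSpace X] [Group G] where
  /-- The domain of each branch. -/
  source : κ → Set X
  isOpen_source : ∀ c, IsOpen (source c)
  /-- A branch defined at the given point. -/
  indexAt : X → κ
  mem_source_indexAt : ∀ q, q ∈ source (indexAt q)
  /-- The value of each branch, meaningful on its `source` only. -/
  branch : κ → X → G
  eventually_translation_eq : ∀ c d q, q ∈ source c → q ∈ source d →
    ∀ᶠ q' in 𝓝 q, (branch d q')⁻¹ * branch c q' = (branch d q)⁻¹ * branch c q

namespace BranchSystem

variable {κ X G : Type*} [TopologicalSpace X] [Group G] (S : BranchSystem κ X G)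

section Covering

variable [TopologicalSpace G] [DiscreteTopology G]

/-- Gluing data of the covering of `X` on which the multivalued function becomes single-valued. -/
def coveringCore : FiberBundleCore κ X G where
  baseSet := S.source
  isOpen_baseSet := S.isOpen_source
  indexAt := S.indexAt
  mem_baseSet_at := S.mem_source_indexAt
  coordChange c d q v := (S.branch d q)⁻¹ * S.branch c q * v
  coordChange_self c q _ v := by rw [inv_mul_cancel, one_mul]
  continuousOn_coordChange c d := by
    rintro ⟨q, v⟩ ⟨⟨hc, hd⟩, -⟩
    refine ContinuousAt.continuousWithinAt (ContinuousAt.mul ?_ continuousAt_snd)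
    exact continuousAt_const.congr <| (continuousAt_fst.eventually
      (S.eventually_translation_eq c d q hc hd)).mono fun _ h => h.symm
  coordChange_comp c d e q _ v := by group

theorem isCoveringMap_proj : IsCoveringMap S.coveringCore.proj :=
  FiberBundle.isCoveringMap (F := G) (E := S.coveringCore.Fiber)

/-- The point of the covering over `q` at which the single-valued function takes the value `u`. -/
def lift (q : X) (u : G) : S.coveringCore.proj ⁻¹' {q} :=
  ⟨⟨q, (S.branch (S.indexAt q) q)⁻¹ * u⟩, rfl⟩

theorem lift_injective (q : X) : Function.Injective (S.lift q) := fun _ _ h =>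
  mul_left_cancel (eq_of_heq (Bundle.TotalSpace.mk.inj (congrArg Subtype.val h)).2)

theorem localTriv_symm_apply (c : κ) (q : X) (v : G) :
    (S.coveringCore.localTriv c).toOpenPartialHomeomorph.symm (q, v)
      = (S.lift q (S.branch c q * v)).1 := by
  rw [FiberBundleCore.localTriv_symm_apply]
  simp only [coveringCore, lift, mul_assoc]

theorem monodromy_mk_of_mem_source (c : κ) {p q : X} (γ : Path p q) (hγ : ∀ s, γ s ∈ S.source c)
    (u : G) :
    S.isCoveringMap_proj.monodromy (.mk γ) (S.lift p u)
      = S.lift q (S.branch c q * (S.branch c p)⁻¹ * u) := by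
  let v : G := (S.branch c p)⁻¹ * u
  let Γ : I → S.coveringCore.TotalSpace := fun s =>
    (S.coveringCore.localTriv c).toOpenPartialHomeomorph.symm (γ s, v)
  have continuous_Γ : Continuous Γ :=
    (S.coveringCore.localTriv c).toOpenPartialHomeomorph.symm.continuousOn.comp_continuous
      (by fun_prop) fun s => (FiberBundleCore.mem_localTriv_target _ _ _).2 (hγ s)
  have Γ_eq_lift := (S.isCoveringMap_proj.eq_liftPath_iff (γ := (γ : C(I, X)))
    (e := (S.lift p u).1) (Γ := Γ) (by simp [lift])).2 ⟨continuous_Γ, rfl, by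
      simp only [Γ, localTriv_symm_apply, v]
      rw [γ.source, mul_inv_cancel_left]⟩
  refine Subtype.ext (Eq.trans (congrFun Γ_eq_lift 1).symm ?_)
  simp only [Γ, localTriv_symm_apply, v]
  rw [γ.target, mul_assoc]

theorem exists_monodromy_lift_eq {p q : X} (k : Path.Homotopic.Quotient p q) :
    ∃ g : G, ∀ u, S.isCoveringMap_proj.monodromy k (S.lift p u) = S.lift q (g * u) := by
  induction k using homotopicQuotient_induction S.isOpen_source
    fun q => ⟨_, S.mem_source_indexAt q⟩ with
  | small c γ hγ => exact ⟨_, S.monodromy_mk_of_mem_source c γ hγ⟩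
  | trans k l hk hl =>
    obtain ⟨⟨g, hg⟩, ⟨g', hg'⟩⟩ := And.intro hk hl
    exact ⟨g' * g, fun u => by
      rw [S.isCoveringMap_proj.monodromy_trans_apply, hg, hg', mul_assoc]⟩

end Covering

/-- `h` assigns to each path class the factor by which analytic continuation along it multiplies
the values of the multivalued function. -/
structure IsHolonomy (h : ∀ {p q : X}, Path.Homotopic.Quotient p q → G) : Prop where
  trans : ∀ {p q r : X} (k : Path.Homotopic.Quotient p q) (l : Path.Homotopic.Quotient q r),
    h (k.trans l) = h l * h k
  mk_of_mem_source : ∀ c {p q : X} (γ : Path p q), (∀ s, γ s ∈ S.source c) →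
    h (.mk γ) = S.branch c q * (S.branch c p)⁻¹

theorem exists_isHolonomy : ∃ h : ∀ {p q : X}, Path.Homotopic.Quotient p q → G,
    S.IsHolonomy h := by
  let : TopologicalSpace G := ⊥
  have : DiscreteTopology G := ⟨rfl⟩
  choose h monodromy_lift using fun p q => S.exists_monodromy_lift_eq (p := p) (q := q)
  have eq_of_monodromy {p q : X} {k : Path.Homotopic.Quotient p q} {g : G}
      (hk : S.isCoveringMap_proj.monodromy k (S.lift p 1) = S.lift q g) : h p q k = g := by
    rw [monodromy_lift, mul_one] at hk
    exact S.lift_injective q hk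
  refine ⟨fun {p q} => h p q, ⟨fun k l => eq_of_monodromy ?_, fun c _ _ γ hγ => eq_of_monodromy ?_⟩⟩
  · rw [S.isCoveringMap_proj.monodromy_trans_apply, monodromy_lift, monodromy_lift, mul_one]
  · rw [S.monodromy_mk_of_mem_source c γ hγ, mul_one]

variable {S}

theorem IsHolonomy.map_holonomy {h : ∀ {p q : X}, Path.Homotopic.Quotient p q → G}
    (hh : S.IsHolonomy h) {x : X} (φ : G →* FundamentalGroup X x)
    (access : ∀ c q, q ∈ S.source c → Path.Homotopic.Quotient x q)
    (access_trans : ∀ c {p q : X} (γ : Path p q) (hp : p ∈ S.source c) (hq : q ∈ S.source c),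
      (∀ s, γ s ∈ S.source c) → (access c p hp).trans (.mk γ) = access c q hq)
    (access_eq : ∀ c d q (hc : q ∈ S.source c) (hd : q ∈ S.source d),
      access c q hc = .trans (φ ((S.branch d q)⁻¹ * S.branch c q)) (access d q hd))
    {c : κ} (hx : x ∈ S.source c) (access_self : access c x hx = .refl x)
    (hbranch : S.branch c x = 1) (k : FundamentalGroup X x) : φ (h k) = k := by
  -- `φ` matches the translations of the branches with those of the access classes, so prolonging an
  -- access class along `k` multiplies it by `φ` of the factor `h k` gained by the branches.
  have trans_eq {p q : X} (k : Path.Homotopic.Quotient p q) : ∀ c d hp hq, (access c p hp).trans k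
      = .trans (φ ((S.branch d q)⁻¹ * h k * S.branch c p)) (access d q hq) := by
    induction k using homotopicQuotient_induction S.isOpen_source
      fun q => ⟨_, S.mem_source_indexAt q⟩ with
    | @small e p q γ hγ =>
      intro c d hp hq
      have hp' : p ∈ S.source e := by simpa using hγ 0
      have hq' : q ∈ S.source e := by simpa using hγ 1
      rw [access_eq c e p hp hp', Path.Homotopic.Quotient.trans_assoc, access_trans e γ hp' hq' hγ,
        access_eq e d q hq' hq, ← Path.Homotopic.Quotient.trans_assoc, ← FundamentalGroup.mul_def,
        ← map_mul, hh.mk_of_mem_source e γ hγ]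
      simp only [mul_assoc]
    | @trans p q r k l hk hl =>
      intro c d hp hr
      have hq := S.mem_source_indexAt q
      rw [← Path.Homotopic.Quotient.trans_assoc, hk c _ hp hq, Path.Homotopic.Quotient.trans_assoc,
        hl _ d hq hr, ← Path.Homotopic.Quotient.trans_assoc, ← FundamentalGroup.mul_def,
        ← map_mul, hh.trans]
      simp only [mul_assoc, mul_inv_cancel_left]
  simpa [access_self, hbranch] using (trans_eq k c c hx hx).symm

end BranchSystem

/-- An open cover of `X` by simply connected sets: the base `chart none` and the handles
`chart (some i)`. Each handle meets the base in two disjoint path-connected feet, its `tail` and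
its `head`, and distinct handles meet only inside the base. -/
structure HandleCover (ι X : Type*) [TopologicalSpace X] where
  /-- The base, as `chart none`, and the handles. -/
  chart : Option ι → Set X
  /-- The foot at which the handle starts. -/
  tail : ι → Set X
  /-- The foot at which the handle ends. -/
  head : ι → Set X
  isOpen_chart : ∀ c, IsOpen (chart c)
  isOpen_tail : ∀ i, IsOpen (tail i)
  isOpen_head : ∀ i, IsOpen (head i)
  isSimplyConnected_chart : ∀ c, IsSimplyConnected (chart c)
  isPathConnected_tail : ∀ i, IsPathConnected (tail i)
  isPathConnected_head : ∀ i, IsPathConnected (head i)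
  tail_union_head : ∀ i, tail i ∪ head i = chart none ∩ chart (some i)
  disjoint_tail_head : ∀ i, Disjoint (tail i) (head i)
  chart_inter_chart_subset : Pairwise fun c d => chart c ∩ chart d ⊆ chart none
  exists_mem_chart : ∀ q, ∃ c, q ∈ chart c

namespace HandleCover

variable {ι X : Type*} [TopologicalSpace X] (C : HandleCover ι X)

theorem tail_subset_chart_none (i : ι) : C.tail i ⊆ C.chart none :=
  (subset_union_left.trans (C.tail_union_head i).subset).trans inter_subset_left

theorem tail_subset_chart_some (i : ι) : C.tail i ⊆ C.chart (some i) :=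
  (subset_union_left.trans (C.tail_union_head i).subset).trans inter_subset_right

theorem head_subset_chart_none (i : ι) : C.head i ⊆ C.chart none :=
  (subset_union_right.trans (C.tail_union_head i).subset).trans inter_subset_left

theorem head_subset_chart_some (i : ι) : C.head i ⊆ C.chart (some i) :=
  (subset_union_right.trans (C.tail_union_head i).subset).trans inter_subset_right

open Classical in
/-- The multivalued function to the free group on the handles that is constant on the base and is
multiplied by the `i`-th generator from the tail to the head of the `i`-th handle. Its values on
the `i`-th handle matter only on the two feet. -/
noncomputable def freeBranch : Option ι → X → FreeGroup ι
  | none, _ => 1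
  | some i, q => if q ∈ C.head i then .of i else 1

theorem freeBranch_none (q : X) : C.freeBranch none q = 1 := rfl

theorem freeBranch_of_mem_tail {i : ι} {q : X} (hq : q ∈ C.tail i) :
    C.freeBranch (some i) q = 1 :=
  if_neg (disjoint_left.1 (C.disjoint_tail_head i) hq)

theorem freeBranch_of_mem_head {i : ι} {q : X} (hq : q ∈ C.head i) :
    C.freeBranch (some i) q = .of i :=
  if_pos hq

theorem eventually_freeBranch_eq {q : X} (hq : q ∈ C.chart none) :
    ∀ {c}, q ∈ C.chart c → ∀ᶠ q' in 𝓝 q, C.freeBranch c q' = C.freeBranch c q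
  | none, _ => .of_forall fun _ => rfl
  | some i, hi => by
    obtain hq | hq := (C.tail_union_head i).superset ⟨hq, hi⟩
    · filter_upwards [(C.isOpen_tail i).mem_nhds hq] with q' hq'
      rw [C.freeBranch_of_mem_tail hq, C.freeBranch_of_mem_tail hq']
    · filter_upwards [(C.isOpen_head i).mem_nhds hq] with q' hq'
      rw [C.freeBranch_of_mem_head hq, C.freeBranch_of_mem_head hq']

/-- The branch system formed by `freeBranch`. -/
noncomputable def branchSystem : BranchSystem (Option ι) X (FreeGroup ι) where
  source := C.chart
  isOpen_source := C.isOpen_chart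
  indexAt q := (C.exists_mem_chart q).choose
  mem_source_indexAt q := (C.exists_mem_chart q).choose_spec
  branch := C.freeBranch
  eventually_translation_eq c d q hc hd := by
    obtain rfl | hcd := eq_or_ne c d
    · simp only [inv_mul_cancel, Filter.eventually_true]
    · have hq := C.chart_inter_chart_subset hcd ⟨hc, hd⟩
      filter_upwards [C.eventually_freeBranch_eq hq hc, C.eventually_freeBranch_eq hq hd]
        with q' hc' hd'
      rw [hc', hd']

/-- A chosen point of the tail of each handle. -/
noncomputable def tailPoint (i : ι) : X := (C.isPathConnected_tail i).nonempty.some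

theorem tailPoint_mem (i : ι) : C.tailPoint i ∈ C.tail i :=
  (C.isPathConnected_tail i).nonempty.some_mem

/-- A chosen point of the head of each handle. -/
noncomputable def headPoint (i : ι) : X := (C.isPathConnected_head i).nonempty.some

theorem headPoint_mem (i : ι) : C.headPoint i ∈ C.head i :=
  (C.isPathConnected_head i).nonempty.some_mem

/-- The homotopy class of the paths from `p` to `q` inside one chart. -/
noncomputable def chartClass {c : Option ι} {p q : X} (hp : p ∈ C.chart c) (hq : q ∈ C.chart c) :
    Path.Homotopic.Quotient p q :=
  classWithin (C.isSimplyConnected_chart c) hp hq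

theorem chartClass_trans {c : Option ι} {p q r : X} (hp : p ∈ C.chart c) (hq : q ∈ C.chart c)
    (hr : r ∈ C.chart c) :
    (C.chartClass hp hq).trans (C.chartClass hq hr) = C.chartClass hp hr :=
  classWithin_trans _ hp hq hr

theorem chartClass_eq_of_mem_tail {i : ι} {p q : X} (hp : p ∈ C.tail i) (hq : q ∈ C.tail i) :
    C.chartClass (C.tail_subset_chart_some i hp) (C.tail_subset_chart_some i hq)
      = C.chartClass (C.tail_subset_chart_none i hp) (C.tail_subset_chart_none i hq) :=
  classWithin_eq_of_isPathConnected _ _ (C.isPathConnected_tail i) _ _ hp hq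

theorem chartClass_eq_of_mem_head {i : ι} {p q : X} (hp : p ∈ C.head i) (hq : q ∈ C.head i) :
    C.chartClass (C.head_subset_chart_some i hp) (C.head_subset_chart_some i hq)
      = C.chartClass (C.head_subset_chart_none i hp) (C.head_subset_chart_none i hq) :=
  classWithin_eq_of_isPathConnected _ _ (C.isPathConnected_head i) _ _ hp hq

section BasePoint

variable {x : X} (hx : x ∈ C.chart none)

/-- The class of the paths from the base point to a point of a chart that reach the tail through
the base, if the chart is a handle, and then stay in the chart. -/
noncomputable def access : ∀ {c q}, q ∈ C.chart c → Path.Homotopic.Quotient x q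
  | none, _, hq => C.chartClass hx hq
  | some i, _, hq =>
    (C.chartClass hx (C.tail_subset_chart_none i (C.tailPoint_mem i))).trans
      (C.chartClass (C.tail_subset_chart_some i (C.tailPoint_mem i)) hq)

/-- The loop through the base to the tail of the `i`-th handle, along the handle to its head, and
back through the base. -/
noncomputable def loop (i : ι) : FundamentalGroup X x :=
  .fromPath ((C.access hx (C.head_subset_chart_some i (C.headPoint_mem i))).trans
    (C.chartClass (C.head_subset_chart_none i (C.headPoint_mem i)) hx))

theorem access_trans_chartClass : ∀ {c} {p q : X} (hp : p ∈ C.chart c) (hq : q ∈ C.chart c),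
    (C.access hx hp).trans (C.chartClass hp hq) = C.access hx hq
  | none, _, _, hp, hq => C.chartClass_trans hx hp hq
  | some i, _, _, hp, hq => by
    rw [access, Path.Homotopic.Quotient.trans_assoc, chartClass_trans, access]

theorem access_trans_mk {c : Option ι} {p q : X} (γ : Path p q) (hp : p ∈ C.chart c)
    (hq : q ∈ C.chart c) (hγ : ∀ s, γ s ∈ C.chart c) :
    (C.access hx hp).trans (.mk γ) = C.access hx hq := by
  rw [← classWithin_eq_mk (C.isSimplyConnected_chart c) hp hq γ hγ]
  exact C.access_trans_chartClass hx hp hq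

theorem access_of_mem_tail {i : ι} {q : X} (hq : q ∈ C.tail i) :
    C.access hx (C.tail_subset_chart_some i hq)
      = C.access hx (C.tail_subset_chart_none i hq) := by
  rw [access, access, C.chartClass_eq_of_mem_tail (C.tailPoint_mem i) hq, chartClass_trans]

theorem access_of_mem_head {i : ι} {q : X} (hq : q ∈ C.head i) :
    C.access hx (C.head_subset_chart_some i hq)
      = .trans (C.loop hx i) (C.access hx (C.head_subset_chart_none i hq)) := by
  rw [loop, FundamentalGroup.fromPath, Path.Homotopic.Quotient.trans_assoc,
    access, chartClass_trans, ← C.chartClass_eq_of_mem_head (C.headPoint_mem i) hq,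
    access_trans_chartClass]

/-- The homomorphism sending the `i`-th generator to the loop through the `i`-th handle. -/
noncomputable def ofFreeGroup : FreeGroup ι →* FundamentalGroup X x := FreeGroup.lift (C.loop hx)

theorem access_eq_ofFreeGroup_trans {q : X} (hq : q ∈ C.chart none) : ∀ {c} (hc : q ∈ C.chart c),
    C.access hx hc = .trans (C.ofFreeGroup hx (C.freeBranch c q)) (C.access hx hq)
  | none, _ => by
    rw [freeBranch_none, map_one, FundamentalGroup.one_def, Path.Homotopic.Quotient.refl_trans]
  | some i, hi => by
    obtain hq | hq := (C.tail_union_head i).superset ⟨hq, hi⟩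
    · rw [C.freeBranch_of_mem_tail hq, map_one, FundamentalGroup.one_def,
        Path.Homotopic.Quotient.refl_trans, C.access_of_mem_tail hx hq]
    · rw [C.freeBranch_of_mem_head hq, ofFreeGroup, FreeGroup.lift_apply_of,
        C.access_of_mem_head hx hq]

theorem access_eq_trans_access {c d : Option ι} {q : X} (hc : q ∈ C.chart c) (hd : q ∈ C.chart d) :
    C.access hx hc = .trans
      (C.ofFreeGroup hx ((C.freeBranch d q)⁻¹ * C.freeBranch c q)) (C.access hx hd) := by
  obtain rfl | hcd := eq_or_ne c d
  · rw [inv_mul_cancel, map_one, FundamentalGroup.one_def, Path.Homotopic.Quotient.refl_trans]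
  · have hq := C.chart_inter_chart_subset hcd ⟨hc, hd⟩
    rw [C.access_eq_ofFreeGroup_trans hx hq hc, C.access_eq_ofFreeGroup_trans hx hq hd,
      ← Path.Homotopic.Quotient.trans_assoc, ← FundamentalGroup.mul_def, ← map_mul,
      mul_inv_cancel_left]

variable {h : ∀ {p q : X}, Path.Homotopic.Quotient p q → FreeGroup ι}

theorem holonomy_chartClass (hh : C.branchSystem.IsHolonomy h) {c : Option ι} {p q : X}
    (hp : p ∈ C.chart c) (hq : q ∈ C.chart c) :
    h (C.chartClass hp hq) = C.freeBranch c q * (C.freeBranch c p)⁻¹ :=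
  hh.mk_of_mem_source c _ (JoinedIn.somePath_mem _)

theorem holonomy_loop (hh : C.branchSystem.IsHolonomy h) (i : ι) : h (C.loop hx i) = .of i := by
  rw [loop, FundamentalGroup.fromPath, access]
  simp only [hh.trans, C.holonomy_chartClass hh, C.freeBranch_of_mem_tail (C.tailPoint_mem i),
    C.freeBranch_of_mem_head (C.headPoint_mem i), freeBranch_none, inv_one, mul_one, one_mul]

theorem nonempty_fundamentalGroup_mulEquiv_of_mem_chart_none (hx : x ∈ C.chart none) :
    Nonempty (FundamentalGroup X x ≃* FreeGroup ι) := by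
  obtain ⟨h, hh⟩ := C.branchSystem.exists_isHolonomy
  let holonomy : FundamentalGroup X x →* FreeGroup ι :=
    MonoidHom.mk' (fun k => h k) fun k l => hh.trans l k
  refine ⟨holonomy.toMulEquiv (C.ofFreeGroup hx) (MonoidHom.ext fun k => ?_)
    (FreeGroup.ext_hom _ _ fun i => ?_)⟩
  · exact hh.map_holonomy (C.ofFreeGroup hx) (fun _ _ => C.access hx)
      (fun _ _ _ γ hp hq hγ => C.access_trans_mk hx γ hp hq hγ)
      (fun _ _ _ => C.access_eq_trans_access hx) hx
      (classWithin_self (C.isSimplyConnected_chart none) hx) (C.freeBranch_none x) k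
  · change h (C.ofFreeGroup hx (.of i)) = .of i
    rw [ofFreeGroup, FreeGroup.lift_apply_of, C.holonomy_loop hx hh]

end BasePoint

theorem exists_path_mem_chart_none (x : X) :
    ∃ x₀ ∈ C.chart none, Nonempty (Path x x₀) := by
  match C.exists_mem_chart x with
  | ⟨none, hx⟩ => exact ⟨x, hx, ⟨.refl x⟩⟩
  | ⟨some i, hx⟩ =>
    have ha := C.tailPoint_mem i
    have joined := (C.isSimplyConnected_chart (some i)).isPathConnected.joinedIn x hx _
      (C.tail_subset_chart_some i ha)
    exact ⟨_, C.tail_subset_chart_none i ha, ⟨joined.somePath⟩⟩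

theorem nonempty_fundamentalGroup_mulEquiv (C : HandleCover ι X) (x : X) :
    Nonempty (FundamentalGroup X x ≃* FreeGroup ι) := by
  obtain ⟨x₀, hx₀, ⟨γ⟩⟩ := C.exists_path_mem_chart_none x
  obtain ⟨e⟩ := C.nonempty_fundamentalGroup_mulEquiv_of_mem_chart_none hx₀
  exact ⟨(FundamentalGroup.fundamentalGroupMulEquivOfPath γ).trans e⟩

end HandleCover

section HomotopyEquivalence

variable {X Y : Type*} [TopologicalSpace X] [TopologicalSpace Y]

/-- A homotopy equivalence induces an isomorphism of fundamental groups. -/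
noncomputable def fundamentalGroupMulEquivOfHomotopyEquiv (e : X ≃ₕ Y) (x : X) :
    FundamentalGroup X x ≃* FundamentalGroup Y (e x) :=
  (FundamentalGroupoidFunctor.equivOfHomotopyEquiv e).fullyFaithfulFunctor.mulEquivEnd
    (FundamentalGroupoid.mk x)

variable {E F : Type*} [AddCommGroup E] [Module ℝ E] [TopologicalSpace E] [IsTopologicalAddGroup E]
  [ContinuousSMul ℝ E] [AddCommGroup F] [Module ℝ F] [TopologicalSpace F] [IsTopologicalAddGroup F]
  [ContinuousSMul ℝ F]

/-- A subset `W` of a vector space is homotopy equivalent to `Y` by maps `r : W → Y` and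
`s : Y → W` with `r ∘ s = id`, if `W` contains the segment from `s (r w)` to `w`. -/
noncomputable def homotopyEquivOfSegmentSubset {W : Set E} (r : C(W, Y)) (s : C(Y, W))
    (hrs : ∀ y, r (s y) = y) (hsegment : ∀ w, segment ℝ (s (r w) : E) w ⊆ W) : W ≃ₕ Y where
  toFun := r
  invFun := s
  left_inv := ⟨{
    toFun := fun p => ⟨AffineMap.lineMap (s (r p.2) : E) (p.2 : E) (p.1 : ℝ),
      hsegment p.2 (lineMap_mem_segment ℝ _ _ p.1.2)⟩
    continuous_toFun := Continuous.subtype_mk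
      (by simp only [AffineMap.lineMap_apply_module']; fun_prop) _
    map_zero_left := fun w => Subtype.ext (AffineMap.lineMap_apply_zero _ _)
    map_one_left := fun w => Subtype.ext (AffineMap.lineMap_apply_one _ _) }⟩
  right_inv := by rw [show r.comp s = .id Y from ContinuousMap.ext hrs]

theorem isSimplyConnected_of_convex_slices {J : Set E} (hJ : Convex ℝ J) (hJ' : J.Nonempty)
    {W : Set (E × F)} {m : F} (fst_mem : ∀ q ∈ W, q.1 ∈ J) (mem : ∀ u ∈ J, (u, m) ∈ W)
    (convex_slice : ∀ u, Convex ℝ {v | (u, v) ∈ W}) : IsSimplyConnected W := by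
  have : ContractibleSpace J := hJ.contractibleSpace hJ'
  let fst : C(W, J) := ⟨fun q => ⟨q.1.1, fst_mem q q.2⟩, by fun_prop⟩
  let horizontal : C(J, W) := ⟨fun u => ⟨(u, m), mem u u.2⟩, by fun_prop⟩
  let e : W ≃ₕ J := homotopyEquivOfSegmentSubset fst horizontal (fun _ => rfl) <| by
    rintro ⟨⟨u, v⟩, hq⟩
    change segment ℝ (u, m) (u, v) ⊆ W
    rw [← Prod.image_mk_segment_right]
    rintro _ ⟨v', hv', rfl⟩
    exact (convex_slice u).segment_subset (mem u (fst_mem _ hq)) hq hv'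
  have := e.contractibleSpace
  exact SimplyConnectedSpace.ofContractible W

/-- A family of functionals `Φ z` that are `1` at `e` flattens each slice `E × {z}` to a line, by
contracting the kernel of `Φ z`. -/
noncomputable def homotopyEquivOfDualFamily {e : E} {Φ : F → Module.Dual ℝ E}
    (hΦ : Continuous fun q : E × F => Φ q.2 q.1) (he : ∀ z, Φ z e = 1)
    (A : Set (F × ℝ)) : {q : E × F | (q.2, Φ q.2 q.1) ∈ A} ≃ₕ A :=
  homotopyEquivOfSegmentSubset
    ⟨fun q => ⟨(q.1.2, Φ q.1.2 q.1.1), q.2⟩,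
      ((continuous_snd.prodMk hΦ).comp continuous_subtype_val).subtype_mk _⟩
    ⟨fun w => ⟨(w.1.2 • e, w.1.1), by simp [he]⟩, by fun_prop⟩
    (fun w => by simp [he]) <| by
      rintro ⟨⟨y, z⟩, hq⟩
      change segment ℝ (Φ z y • e, z) (y, z) ⊆ _
      rw [← Prod.image_mk_segment_left]
      rintro _ ⟨y', hy', rfl⟩
      have apply_eq : Φ z y' = Φ z y :=
        (convex_hyperplane (Φ z).isLinear (Φ z y)).segment_subset (by simp [he]) rfl hy'
      simpa only [mem_ofPred_eq, apply_eq] using hq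

end HomotopyEquivalence

section PuncturedPlane

theorem isSimplyConnected_preimage_subtypeVal {X : Type*} [TopologicalSpace X] {S W : Set X}
    (hW : IsSimplyConnected W) (hWS : W ⊆ S) :
    IsSimplyConnected (Subtype.val ⁻¹' W : Set S) := by
  rwa [← IsEmbedding.subtypeVal.isSimplyConnected_image, Subtype.image_preimage_val,
    inter_eq_right.2 hWS]

theorem isPathConnected_preimage_subtypeVal {X : Type*} [TopologicalSpace X] {S W : Set X}
    (hW : IsPathConnected W) (hWS : W ⊆ S) :
    IsPathConnected (Subtype.val ⁻¹' W : Set S) := by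
  rwa [IsInducing.subtypeVal.isPathConnected_iff, Subtype.image_preimage_val,
    inter_eq_right.2 hWS]

theorem exists_pos_forall_dist_lt_imp_eq {ι M : Type*} [Finite ι] [MetricSpace M] {x : ι → M}
    (hx : Function.Injective x) : ∃ δ > 0, ∀ i j, dist (x i) (x j) < δ → i = j := by
  have small : ∀ᶠ δ in 𝓝[>] (0 : ℝ), ∀ i j, dist (x i) (x j) < δ → i = j := by
    refine Filter.eventually_all.2 fun i => Filter.eventually_all.2 fun j => ?_
    obtain rfl | hij := eq_or_ne i j
    · exact .of_forall fun _ _ => rfl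
    · filter_upwards [nhdsWithin_le_nhds (Iio_mem_nhds (dist_pos.2 (hx.ne hij)))] with δ hδ h
      exact absurd (h.trans hδ) (lt_irrefl _)
  exact (eventually_mem_nhdsWithin.and small).exists

variable {ι : Type*} (p : ι → ℝ × ℝ) (δ : ℝ)

/-- An open cover of the plane minus the points `p i`: as `none`, the plane minus the closed
vertical rays going up from the `p i`, and as `some i` the vertical strip of half-width `δ` around
`p i` minus the closed vertical ray going down from `p i`. -/
def slitChart : Option ι → Set (ℝ × ℝ)
  | none => {q | ∀ i, q.1 = (p i).1 → q.2 < (p i).2}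
  | some i => {q | dist q.1 (p i).1 < δ ∧ (q.1 = (p i).1 → (p i).2 < q.2)}

/-- The open half-strip of width `δ` to the left of `p i`. -/
def leftStrip (i : ι) : Set (ℝ × ℝ) := Ioo ((p i).1 - δ) (p i).1 ×ˢ univ

/-- The open half-strip of width `δ` to the right of `p i`. -/
def rightStrip (i : ι) : Set (ℝ × ℝ) := Ioo (p i).1 ((p i).1 + δ) ×ˢ univ

variable {p δ}

theorem isOpen_slitChart [Finite ι] : ∀ c, IsOpen (slitChart p δ c)
  | none => by
    simp only [slitChart, ofPred_forall, imp_iff_not_or]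
    exact isOpen_iInter_of_finite fun i =>
      (isOpen_ne_fun continuous_fst continuous_const).union
        (isOpen_lt continuous_snd continuous_const)
  | some i => by
    simp only [slitChart, imp_iff_not_or]
    exact (isOpen_lt (continuous_fst.dist continuous_const) continuous_const).inter
      ((isOpen_ne_fun continuous_fst continuous_const).union
        (isOpen_lt continuous_const continuous_snd))

theorem isSimplyConnected_slitChart [Finite ι] (hδ : 0 < δ) :
    ∀ c, IsSimplyConnected (slitChart p δ c)
  | none => by
    obtain ⟨m, hm⟩ := (finite_range fun i => (p i).2).bddBelow
    refine isSimplyConnected_of_convex_slices convex_univ univ_nonempty (m := m - 1)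
      (fun _ _ => mem_univ _) (fun u _ i _ => ?_) fun u v hv w hw a b ha hb hab i hi => ?_
    · exact (sub_one_lt m).trans_le (hm (mem_range_self i))
    · exact convex_Iio (p i).2 (hv i hi) (hw i hi) ha hb hab
  | some i => by
    refine isSimplyConnected_of_convex_slices (convex_ball (p i).1 δ) (Metric.nonempty_ball.2 hδ)
      (m := (p i).2 + 1) (fun q hq => hq.1) (fun u hu => ⟨hu, fun _ => lt_add_one _⟩)
      fun u v hv w hw a b ha hb hab => ⟨hv.1, fun hi => ?_⟩
    exact convex_Ioi (p i).2 (hv.2 hi) (hw.2 hi) ha hb hab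

theorem isPathConnected_leftStrip (hδ : 0 < δ) (i : ι) : IsPathConnected (leftStrip p δ i) :=
  ((convex_Ioo _ _).prod convex_univ).isPathConnected
    ((nonempty_Ioo.2 (sub_lt_self _ hδ)).prod univ_nonempty)

theorem isPathConnected_rightStrip (hδ : 0 < δ) (i : ι) : IsPathConnected (rightStrip p δ i) :=
  ((convex_Ioo _ _).prod convex_univ).isPathConnected
    ((nonempty_Ioo.2 (lt_add_of_pos_right _ hδ)).prod univ_nonempty)

theorem disjoint_leftStrip_rightStrip (i : ι) : Disjoint (leftStrip p δ i) (rightStrip p δ i) :=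
  disjoint_left.2 fun _ hl hr => lt_asymm hl.1.2 hr.1.1

theorem slitChart_none_subset : slitChart p δ none ⊆ (range p)ᶜ := by
  rintro _ hq ⟨i, rfl⟩
  exact lt_irrefl _ (hq i rfl)

theorem exists_mem_slitChart (hδ : 0 < δ) {q : ℝ × ℝ} (hq : q ∉ range p) :
    ∃ c, q ∈ slitChart p δ c := by
  by_cases hq₀ : q ∈ slitChart p δ none
  · exact ⟨none, hq₀⟩
  · simp only [slitChart, mem_ofPred_eq, not_forall, not_lt] at hq₀
    obtain ⟨i, hi, above⟩ := hq₀
    exact ⟨some i, by rwa [hi, dist_self],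
      fun _ => above.lt_of_ne fun h => hq ⟨i, Prod.ext hi.symm h⟩⟩

theorem slitChart_subset (hp : ∀ i j, dist (p i).1 (p j).1 < δ → i = j) :
    ∀ c, slitChart p δ c ⊆ (range p)ᶜ
  | none => slitChart_none_subset
  | some i => by
    rintro _ ⟨near, above⟩ ⟨j, rfl⟩
    obtain rfl := hp j i near
    exact lt_irrefl _ (above rfl)

theorem slitChart_inter_slitChart_subset (hp : ∀ i j, dist (p i).1 (p j).1 < δ → i = j) :
    Pairwise fun c d => slitChart p δ c ∩ slitChart p δ d ⊆ slitChart p δ none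
  | none, _, _ => inter_subset_left
  | _, none, _ => inter_subset_right
  | some i, some j, hij => by
    rintro q ⟨⟨near_i, -⟩, near_j, -⟩ k hk
    rw [hk] at near_i near_j
    exact absurd (congrArg some ((hp k i near_i).symm.trans (hp k j near_j))) hij

theorem leftStrip_union_rightStrip (hp : ∀ i j, dist (p i).1 (p j).1 < δ → i = j) (i : ι) :
    leftStrip p δ i ∪ rightStrip p δ i = slitChart p δ none ∩ slitChart p δ (some i) := by
  have mem_strips (q : ℝ × ℝ) : q ∈ leftStrip p δ i ∪ rightStrip p δ i ↔
      q.1 ≠ (p i).1 ∧ dist q.1 (p i).1 < δ := by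
    simp only [leftStrip, rightStrip, mem_union, mem_prod, mem_univ, and_true, mem_Ioo,
      Real.dist_eq, abs_lt, ne_iff_lt_or_gt]
    grind
  ext q
  rw [mem_strips]
  constructor
  · rintro ⟨ne, near⟩
    refine ⟨fun k hk => ?_, near, fun hi => absurd hi ne⟩
    rw [hk] at ne near
    exact absurd (congrArg (fun j => (p j).1) (hp k i near)) ne
  · rintro ⟨below, near, above⟩
    exact ⟨fun hi => lt_asymm (below i hi) (above hi), near⟩

theorem strips_subset (hp : ∀ i j, dist (p i).1 (p j).1 < δ → i = j) (i : ι) :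
    leftStrip p δ i ∪ rightStrip p δ i ⊆ (range p)ᶜ :=
  (leftStrip_union_rightStrip hp i).subset.trans (inter_subset_left.trans slitChart_none_subset)

/-- The handle cover of the punctured plane whose charts are the slit charts. -/
def slitHandleCover [Finite ι] (hδ : 0 < δ) (hp : ∀ i j, dist (p i).1 (p j).1 < δ → i = j) :
    HandleCover ι ↥(range p)ᶜ where
  chart c := Subtype.val ⁻¹' slitChart p δ c
  tail i := Subtype.val ⁻¹' leftStrip p δ i
  head i := Subtype.val ⁻¹' rightStrip p δ i
  isOpen_chart c := (isOpen_slitChart c).preimage continuous_subtype_val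
  isOpen_tail i := (isOpen_Ioo.prod isOpen_univ).preimage continuous_subtype_val
  isOpen_head i := (isOpen_Ioo.prod isOpen_univ).preimage continuous_subtype_val
  isSimplyConnected_chart c := isSimplyConnected_preimage_subtypeVal
    (isSimplyConnected_slitChart hδ c) (slitChart_subset hp c)
  isPathConnected_tail i := isPathConnected_preimage_subtypeVal (isPathConnected_leftStrip hδ i)
    (subset_union_left.trans (strips_subset hp i))
  isPathConnected_head i := isPathConnected_preimage_subtypeVal (isPathConnected_rightStrip hδ i)
    (subset_union_right.trans (strips_subset hp i))
  tail_union_head i := by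
    rw [← preimage_union, leftStrip_union_rightStrip hp, preimage_inter]
  disjoint_tail_head i := (disjoint_leftStrip_rightStrip i).preimage _
  chart_inter_chart_subset c d hcd := preimage_mono (slitChart_inter_slitChart_subset hp hcd)
  exists_mem_chart q := exists_mem_slitChart hδ q.2

theorem exists_injective_fst_add_mul_snd [Finite ι] (hp : Function.Injective p) :
    ∃ m : ℝ, Function.Injective fun i => (p i).1 + m * (p i).2 := by
  have separated : ∀ᶠ m : ℝ in Filter.cofinite, ∀ i j,
      (p i).1 + m * (p i).2 = (p j).1 + m * (p j).2 → i = j := by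
    refine Filter.eventually_all.2 fun i => Filter.eventually_all.2 fun j => ?_
    by_cases h : (p i).2 = (p j).2
    · exact .of_forall fun m hm => hp (Prod.ext (by simpa [h] using hm) h)
    · refine (Filter.eventually_cofinite_ne (((p j).1 - (p i).1) / ((p i).2 - (p j).2))).mono
        fun m ne hm => absurd ?_ ne
      rw [eq_div_iff (sub_ne_zero.2 h)]
      linarith
  exact separated.exists

theorem nonempty_fundamentalGroup_compl_range_mulEquiv [Finite ι] (hp : Function.Injective p)
    (x : ↥(range p)ᶜ) : Nonempty (FundamentalGroup ↥(range p)ᶜ x ≃* FreeGroup ι) := by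
  obtain ⟨m, hm⟩ := exists_injective_fst_add_mul_snd hp
  let shear : ℝ × ℝ ≃ₜ ℝ × ℝ :=
    { toFun := fun q => (q.1 + m * q.2, q.2)
      invFun := fun q => (q.1 - m * q.2, q.2)
      left_inv := fun q => by simp
      right_inv := fun q => by simp }
  have mem_iff (q : ℝ × ℝ) : q ∈ (range p)ᶜ ↔ shear q ∈ (range (shear ∘ p))ᶜ := by
    rw [range_comp, mem_compl_iff, mem_compl_iff, shear.injective.mem_set_image]
  obtain ⟨δ, hδ, isolated⟩ := exists_pos_forall_dist_lt_imp_eq hm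
  let e := fundamentalGroupMulEquivOfHomotopyEquiv (shear.subtype mem_iff).toHomotopyEquiv x
  obtain ⟨e'⟩ := (slitHandleCover (p := shear ∘ p) hδ isolated).nonempty_fundamentalGroup_mulEquiv
    (shear.subtype mem_iff x)
  exact ⟨e.trans e'⟩

end PuncturedPlane

section LevelHyperplanes

theorem exists_dual_apply_eq_and_apply_eq {K E : Type*} [Field K] [AddCommGroup E] [Module K E]
    {e : E} {F G : Module.Dual K E} (hF : F e = 1) (hG : G e = 1) (hFG : F ≠ G) (α β : K) :
    ∃ y, F y = α ∧ G y = β := by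
  obtain ⟨u, hu⟩ := DFunLike.ne_iff.1 hFG
  have hd : F u - G u ≠ 0 := sub_ne_zero.2 hu
  let s := (α - β) / (F u - G u)
  refine ⟨s • u + (α - s * F u) • e, by simp [hF], ?_⟩
  calc G (s • u + (α - s * F u) • e) = α - s * (F u - G u) := by
        simp only [map_add, map_smul, hG, smul_eq_mul, mul_one]; ring
    _ = β := by rw [div_mul_cancel₀ _ hd, sub_sub_cancel]

variable {ι E : Type*} [AddCommGroup E] [Module ℝ E] [TopologicalSpace E]

theorem exists_continuous_dual_interpolation [Finite ι] [Nonempty ι] {e : E} {F : ι → E →L[ℝ] ℝ}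
    (hF : ∀ i, F i e = 1) {t : ι → ℝ} (hFt : F.FactorsThrough t) :
    ∃ Φ : ℝ → Module.Dual ℝ E, (Continuous fun q : E × ℝ => Φ q.2 q.1) ∧ (∀ z, Φ z e = 1) ∧
      ∀ i, Φ (t i) = F i := by
  let levels := (finite_range t).toFinset
  have mem_levels (i : ι) : t i ∈ levels := (finite_range t).mem_toFinset.2 (mem_range_self i)
  let F' : ℝ → E →L[ℝ] ℝ := Function.extend t F 0
  have F'_apply (i : ι) : F' (t i) = F i := hFt.extend_apply 0 i
  let Φ (z : ℝ) : Module.Dual ℝ E :=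
    Polynomial.leval z ∘ₗ Lagrange.interpolate levels id ∘ₗ LinearMap.pi fun s => (F' s).toLinearMap
  refine ⟨Φ, ?_, fun z => ?_, fun i => LinearMap.ext fun y => ?_⟩
  · simp only [Φ, LinearMap.comp_apply, Polynomial.leval_apply, Lagrange.interpolate_apply,
      Polynomial.eval_finsetSum, Polynomial.eval_mul, Polynomial.eval_C, LinearMap.pi_apply]
    fun_prop
  · have interpolate_e : Lagrange.interpolate levels id (fun s => F' s e) = 1 := by
      rw [← Lagrange.interpolate_one Function.injective_id.injOn
        ⟨_, mem_levels (Classical.arbitrary ι)⟩]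
      refine Lagrange.interpolate_eq_of_values_eq_on _ _ fun s hs => ?_
      obtain ⟨i, rfl⟩ := (finite_range t).mem_toFinset.1 hs
      rw [F'_apply, hF, Pi.one_apply]
    exact (congrArg (Polynomial.eval z) interpolate_e).trans Polynomial.eval_one
  · exact (Lagrange.eval_interpolate_at_node (v := id) _ Function.injective_id.injOn
      (mem_levels i)).trans (congrArg (fun f : E →L[ℝ] ℝ => f y) (F'_apply i))

/-- The hyperplane `f = a` at height `t` in `E × ℝ`. -/
def levelHyperplane (f : E →L[ℝ] ℝ) (a t : ℝ) : Set (E × ℝ) := {q | f q.1 = a ∧ q.2 = t}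

theorem levelHyperplane_smul {c : ℝ} (hc : c ≠ 0) (f : E →L[ℝ] ℝ) (a t : ℝ) :
    levelHyperplane (c • f) (c * a) t = levelHyperplane f a t := by
  simp [levelHyperplane, hc]

section Normalized

variable {e : E} {f : ι → E →L[ℝ] ℝ} {a t : ι → ℝ} {L : ι → Set (E × ℝ)}

theorem factorsThrough_of_disjoint_levelHyperplane (hf : ∀ i, f i e = 1)
    (hL : ∀ i, L i = levelHyperplane (f i) (a i) (t i))
    (hdisj : ∀ i j, i ≠ j → Disjoint (L i) (L j)) :
    f.FactorsThrough t := by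
  intro i j hij
  by_contra hne
  obtain ⟨y, hi, hj⟩ := exists_dual_apply_eq_and_apply_eq (hf i) (hf j)
    (ContinuousLinearMap.coe_injective.ne hne) (a i) (a j)
  have disjoint := hdisj i j (ne_of_apply_ne f hne)
  rw [hL, hL] at disjoint
  exact disjoint.ne_of_mem (a := (y, t i)) ⟨hi, rfl⟩ ⟨hj, hij⟩ rfl

theorem injective_of_disjoint_levelHyperplane (hf : ∀ i, f i e = 1)
    (hL : ∀ i, L i = levelHyperplane (f i) (a i) (t i))
    (hdisj : ∀ i j, i ≠ j → Disjoint (L i) (L j)) :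
    Function.Injective fun i => (t i, a i) := by
  intro i j hij
  obtain ⟨ht, ha⟩ := Prod.mk.inj hij
  by_contra hne
  have disjoint := hdisj i j hne
  rw [hL, hL] at disjoint
  exact disjoint.ne_of_mem (a := (a i • e, t i)) ⟨by simp [hf], rfl⟩ ⟨by simp [hf, ha], ht⟩ rfl

theorem nonempty_homotopyEquiv_compl_range [IsTopologicalAddGroup E] [ContinuousSMul ℝ E]
    [Finite ι] [Nonempty ι] (hf : ∀ i, f i e = 1)
    (hL : ∀ i, L i = levelHyperplane (f i) (a i) (t i))
    (hdisj : ∀ i j, i ≠ j → Disjoint (L i) (L j)) :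
    Nonempty ({q // q ∉ ⋃ i, L i} ≃ₕ ↥(range fun i => (t i, a i))ᶜ) := by
  obtain ⟨Φ, hΦ, Φ_e, Φ_t⟩ := exists_continuous_dual_interpolation hf
    (factorsThrough_of_disjoint_levelHyperplane hf hL hdisj)
  have compl_eq : (⋃ i, L i)ᶜ =
      {q : E × ℝ | (q.2, Φ q.2 q.1) ∈ (range fun i => (t i, a i))ᶜ} := by
    ext ⟨y, z⟩
    simp only [hL, levelHyperplane, mem_iUnion, mem_ofPred_eq, mem_compl_iff, mem_range,
      Prod.mk.injEq]
    refine not_congr (exists_congr fun i => ?_)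
    constructor
    · rintro ⟨hy, rfl⟩
      exact ⟨rfl, by rw [Φ_t]; exact hy.symm⟩
    · rintro ⟨rfl, ha⟩
      exact ⟨by rw [ha, Φ_t]; rfl, rfl⟩
  exact ⟨(Homeomorph.setCongr compl_eq).toHomotopyEquiv.trans (homotopyEquivOfDualFamily hΦ Φ_e _)⟩

end Normalized

theorem nonempty_mulEquiv_freeGroup_of_isEmpty [IsEmpty ι] {X : Type*} [TopologicalSpace X]
    [SimplyConnectedSpace X] (x : X) : Nonempty (FundamentalGroup X x ≃* FreeGroup ι) := by
  have : Subsingleton (FundamentalGroup X x) :=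
    inferInstanceAs (Subsingleton (Path.Homotopic.Quotient x x))
  have : Unique (FundamentalGroup X x) := Unique.mk' _
  exact ⟨MulEquiv.ofUnique⟩

theorem fundamental_group_complement_level_lines_free_general
    [IsTopologicalAddGroup E] [ContinuousSMul ℝ E] [Finite ι] {f : ι → E →L[ℝ] ℝ}
    (hf : ∀ i, f i ≠ 0) {a t : ι → ℝ} {L : ι → Set (E × ℝ)}
    (hL : ∀ i, L i = levelHyperplane (f i) (a i) (t i))
    (hdisj : ∀ i j, i ≠ j → Disjoint (L i) (L j)) (x : {q // q ∉ ⋃ i, L i}) :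
    Nonempty (FundamentalGroup {q // q ∉ ⋃ i, L i} x ≃* FreeGroup ι) := by
  obtain hι | hι := isEmpty_or_nonempty ι
  · have compl_eq : (⋃ i, L i)ᶜ = univ := by rw [iUnion_of_empty, compl_empty]
    have := (convex_univ (𝕜 := ℝ) (E := E × ℝ)).contractibleSpace univ_nonempty
    have : ContractibleSpace {q // q ∉ ⋃ i, L i} := (Homeomorph.setCongr compl_eq).contractibleSpace
    exact nonempty_mulEquiv_freeGroup_of_isEmpty x
  · obtain ⟨e, he⟩ := Module.Dual.exists_forall_ne_zero_of_forall_exists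
      (fun i => (f i).toLinearMap) fun i => DFunLike.ne_iff.1 (hf i)
    have apply_e (i : ι) : ((f i e)⁻¹ • f i) e = 1 := inv_mul_cancel₀ (he i)
    have L_eq (i : ι) := (hL i).trans (levelHyperplane_smul (inv_ne_zero (he i)) _ _ _).symm
    obtain ⟨straighten⟩ := nonempty_homotopyEquiv_compl_range apply_e L_eq hdisj
    obtain ⟨φ⟩ := nonempty_fundamentalGroup_compl_range_mulEquiv
      (injective_of_disjoint_levelHyperplane apply_e L_eq hdisj) (straighten x)
    exact ⟨(fundamentalGroupMulEquivOfHomotopyEquiv straighten x).trans φ⟩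

end LevelHyperplanes

section Lines

/-- A functional on the plane whose kernel is spanned by `v`, if `v ≠ 0`. -/
noncomputable def planeNormal (v : ℝ × ℝ) : ℝ × ℝ →L[ℝ] ℝ :=
  v.1 • ContinuousLinearMap.snd ℝ ℝ ℝ - v.2 • ContinuousLinearMap.fst ℝ ℝ ℝ

theorem planeNormal_apply (v y : ℝ × ℝ) : planeNormal v y = v.1 * y.2 - v.2 * y.1 := rfl

theorem planeNormal_ne_zero {v : ℝ × ℝ} (hv : v ≠ 0) : planeNormal v ≠ 0 := by
  intro h
  have h₁ : planeNormal v (0, 1) = 0 := by rw [h]; rfl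
  have h₂ : planeNormal v (1, 0) = 0 := by rw [h]; rfl
  simp only [planeNormal_apply, mul_one, mul_zero, sub_zero, zero_sub, neg_eq_zero] at h₁ h₂
  exact hv (Prod.ext h₁ h₂)

theorem planeNormal_eq_zero_iff {v : ℝ × ℝ} (hv : v ≠ 0) {y : ℝ × ℝ} :
    planeNormal v y = 0 ↔ ∃ s : ℝ, y = s • v := by
  rw [planeNormal_apply, sub_eq_zero]
  constructor
  · intro h
    obtain hv₁ | hv₂ : v.1 ≠ 0 ∨ v.2 ≠ 0 := by
      by_contra! hv₀
      exact hv (Prod.ext hv₀.1 hv₀.2)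
    · refine ⟨y.1 / v.1, Prod.ext (div_mul_cancel₀ _ hv₁).symm ?_⟩
      rw [Prod.smul_snd, smul_eq_mul, div_mul_eq_mul_div, eq_div_iff hv₁]
      linarith
    · refine ⟨y.2 / v.2, Prod.ext ?_ (div_mul_cancel₀ _ hv₂).symm⟩
      rw [Prod.smul_fst, smul_eq_mul, div_mul_eq_mul_div, eq_div_iff hv₂]
      linarith
  · rintro ⟨s, rfl⟩
    simp only [Prod.smul_fst, Prod.smul_snd, smul_eq_mul]
    ring

theorem levelLine_eq_levelHyperplane (p : ℝ × ℝ) {v : ℝ × ℝ} (hv : v ≠ 0) (t : ℝ) :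
    {q | ∃ s : ℝ, q = (p + s • v, t)} = levelHyperplane (planeNormal v) (planeNormal v p) t := by
  ext ⟨y, z⟩
  simp only [levelHyperplane, mem_ofPred_eq, Prod.mk.injEq, exists_and_right]
  rw [← sub_eq_zero (b := planeNormal v p), ← map_sub, planeNormal_eq_zero_iff hv]
  simp only [sub_eq_iff_eq_add']

end Lines

/-- Let `L₁, …, Lₙ` be pairwise disjoint straight lines in `ℝ³ = ℝ² × ℝ`, each level, i.e.
`Lᵢ = {(pᵢ + s • vᵢ, tᵢ) : s ∈ ℝ}` lies in the horizontal plane `ℝ² × {tᵢ}` with direction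
`vᵢ ≠ 0`. Then the fundamental group of the complement `ℝ³ ∖ (L₁ ∪ ⋯ ∪ Lₙ)` is a free group
of rank `n`. -/
theorem fundamental_group_complement_level_lines_free
    (n : ℕ) (p v : Fin n → ℝ × ℝ) (t : Fin n → ℝ) (hv : ∀ i, v i ≠ 0)
    (L : Fin n → Set ((ℝ × ℝ) × ℝ))
    (hL : ∀ i, L i = {q | ∃ s : ℝ, q = (p i + s • v i, t i)})
    (hdisj : ∀ i j, i ≠ j → Disjoint (L i) (L j))
    (x : {q : (ℝ × ℝ) × ℝ // q ∉ ⋃ i, L i}) :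
    Nonempty (FundamentalGroup {q : (ℝ × ℝ) × ℝ // q ∉ ⋃ i, L i} x ≃* FreeGroup (Fin n)) := by
  have L_eq (i : Fin n) :
      L i = levelHyperplane (planeNormal (v i)) (planeNormal (v i) (p i)) (t i) :=
    (hL i).trans (levelLine_eq_levelHyperplane (p i) (hv i) (t i))
  exact fundamental_group_complement_level_lines_free_general
    (fun i => planeNormal_ne_zero (hv i)) L_eq hdisj x
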